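/- Let T be a nice extension of ZFC and let φ, ψ be formulas which locally define inner models over T. Then there is a formula τ which locally defines an inner model over T such that τ is equivalent to the relativization ψ^φ, provably over T. -/

import Mathlib

/- ## A framework for transitive class/set models of fragments of ZFC,
     inside the universe `ZFSet` of ZF sets. -/

open FirstOrder FirstOrder.Language

/-- The language of set theory: a single binary relation symbol `∈`. -/
inductive SetRelSym : ℕ → Type
  | mem : SetRelSym 2

/-- The first-order language of set theory. -/
def setL : FirstOrder.Language := ⟨fun _ => Empty, SetRelSym⟩

/-- Evaluation of a term of the language of set theory (terms are just variables). -/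
def tval {n : ℕ} (v : Fin n → ZFSet) : setL.Term (Empty ⊕ Fin n) → ZFSet
  | .var (Sum.inl e) => e.elim
  | .var (Sum.inr i) => v i
  | .func f _ => f.elim

/-- Tarskian satisfaction of a formula of the language of set theory in a class `S` of
ZF-sets (equipped with true membership), under the assignment `v`. -/
def ZSat (S : Set ZFSet) : ∀ {n : ℕ}, setL.BoundedFormula Empty n → (Fin n → ZFSet) → Prop
  | _, .falsum, _ => False
  | _, .equal t u, v => tval v t = tval v u
  | _, .rel R ts, v =>
      match R with
      | SetRelSym.mem => tval v (ts 0) ∈ tval v (ts 1)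
  | _, .imp φ ψ, v => ZSat S φ v → ZSat S ψ v
  | _, .all φ, v => ∀ x ∈ S, ZSat S φ (Fin.snoc v x)

/-- Satisfaction of a sentence in a class of ZF-sets. -/
def SatS (S : Set ZFSet) (σ : setL.Sentence) : Prop := ZSat S σ finZeroElim

/-- A class of ZF-sets is transitive. -/
def IsTransClass (S : Set ZFSet) : Prop := ∀ x ∈ S, ∀ y ∈ x, y ∈ S

/-- `r` is a well-ordering of the set `x`, from the point of view of the class `S`
(Kuratowski pairs code the relation; minimality is required for nonempty subsets of `x`
lying in `S`). -/
def WellOrders (S : Set ZFSet) (r x : ZFSet) : Prop :=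
  (∀ a ∈ x, ZFSet.pair a a ∉ r) ∧
  (∀ a ∈ x, ∀ b ∈ x, ∀ c ∈ x, ZFSet.pair a b ∈ r → ZFSet.pair b c ∈ r → ZFSet.pair a c ∈ r) ∧
  (∀ a ∈ x, ∀ b ∈ x, a ≠ b → (ZFSet.pair a b ∈ r ∨ ZFSet.pair b a ∈ r)) ∧
  (∀ y ∈ S, (∀ z ∈ y, z ∈ x) → y ≠ ∅ → ∃ m ∈ y, ∀ z ∈ y, ZFSet.pair z m ∉ r)

/-- `S` is a transitive model of ZFC⁻, i.e. of ZFC stated with the Replacement Scheme and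
the Well-Ordering Theorem but without the Power Set Axiom.  (Extensionality and Foundation
are automatic for transitive classes of ZF-sets.) -/
def ModelsZFCminus (S : Set ZFSet) : Prop :=
  IsTransClass S ∧
  (∅ : ZFSet) ∈ S ∧
  (∀ x ∈ S, ∀ y ∈ S, ({x, y} : ZFSet) ∈ S) ∧
  (∀ x ∈ S, (ZFSet.sUnion x : ZFSet) ∈ S) ∧
  ZFSet.omega ∈ S ∧
  (∀ (n : ℕ) (φ : setL.BoundedFormula Empty (n + 1)) (p : Fin n → ZFSet),
    (∀ i, p i ∈ S) → ∀ a ∈ S, ∃ b ∈ S, ∀ y, y ∈ b ↔ (y ∈ a ∧ ZSat S φ (Fin.snoc p y))) ∧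
  (∀ (n : ℕ) (φ : setL.BoundedFormula Empty (n + 2)) (p : Fin n → ZFSet),
    (∀ i, p i ∈ S) → ∀ a ∈ S,
      (∀ x ∈ a, ∃! y, y ∈ S ∧ ZSat S φ (Fin.snoc (Fin.snoc p x) y)) →
      ∃ b ∈ S, ∀ y, y ∈ b ↔ ∃ x ∈ a, y ∈ S ∧ ZSat S φ (Fin.snoc (Fin.snoc p x) y)) ∧
  (∀ x ∈ S, ∃ r ∈ S, WellOrders S r x)

/-- `S` is a transitive model of ZFC. -/
def ModelsZFC (S : Set ZFSet) : Prop :=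
  ModelsZFCminus S ∧ ∀ x ∈ S, ∃ p ∈ S, ∀ y, y ∈ p ↔ (y ∈ S ∧ y ⊆ x)

/-- `f` is (the graph of) a surjection of `a` onto `b`. -/
def SurjFun (f a b : ZFSet) : Prop :=
  ZFSet.IsFunc a b f ∧ ∀ y ∈ b, ∃ x ∈ a, ZFSet.pair x y ∈ f

/-- `f` is (the graph of) an injection of `a` into `b`. -/
def InjFun (f a b : ZFSet) : Prop :=
  ZFSet.IsFunc a b f ∧ ∀ x ∈ a, ∀ x' ∈ a, ∀ y, ZFSet.pair x y ∈ f → ZFSet.pair x' y ∈ f → x = x'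

/-- `f` is (the graph of) a cofinal function from `β` into the ordinal `α`. -/
def CofinalFun (f β α : ZFSet) : Prop :=
  ZFSet.IsFunc β α f ∧ ∀ ξ ∈ α, ∃ η ∈ β, ∃ ζ, ZFSet.pair η ζ ∈ f ∧ (ξ ∈ ζ ∨ ξ = ζ)

/-- `μ = cof(α)` as computed inside the class `S` (for `S = Set.univ`, the true cofinality). -/
def IsCofOf (S : Set ZFSet) (α μ : ZFSet) : Prop :=
  μ ∈ S ∧ μ.IsOrdinal ∧ (∃ f ∈ S, CofinalFun f μ α) ∧
  ∀ ν ∈ S, ZFSet.IsOrdinal ν → (∃ f ∈ S, CofinalFun f ν α) → μ ⊆ ν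

/-- `κ` is a cardinal from the point of view of the class `S`
(for `S = Set.univ`, a true cardinal). -/
def IsCardIn (S : Set ZFSet) (κ : ZFSet) : Prop :=
  κ.IsOrdinal ∧ ∀ α ∈ κ, ∀ f ∈ S, ¬ SurjFun f α κ

/-- `μ` is an (infinite) regular cardinal from the point of view of the class `S`. -/
def IsRegularIn (S : Set ZFSet) (μ : ZFSet) : Prop :=
  ZFSet.omega ⊆ μ ∧ IsCardIn S μ ∧ IsCofOf S μ μ

/-- `ν = μ⁺`, the cardinal successor of `μ`, as computed in the class `S`. -/
def CardSuccIn (S : Set ZFSet) (μ ν : ZFSet) : Prop :=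
  ν ∈ S ∧ IsCardIn S ν ∧ μ ∈ ν ∧ ∀ ξ ∈ S, IsCardIn S ξ → μ ∈ ξ → ν ⊆ ξ

/-- `μ` is the largest cardinal of the model `S`. -/
def IsLargestCardIn (S : Set ZFSet) (μ : ZFSet) : Prop :=
  μ ∈ S ∧ IsCardIn S μ ∧ ∀ x ∈ S, IsCardIn S x → x ⊆ μ

/-- `α = sup A`, for `A` a collection of ordinals: `α` is the least ordinal above all of them. -/
def IsSupOf (α : ZFSet) (A : Set ZFSet) : Prop :=
  α.IsOrdinal ∧ (∀ a ∈ A, a ⊆ α) ∧ ∀ β : ZFSet, β.IsOrdinal → (∀ a ∈ A, a ⊆ β) → α ⊆ β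

/-- `π` is an elementary embedding (for the language of set theory) from the class `S`
into the class `T`. -/
def IsElem (S T : Set ZFSet) (π : ZFSet → ZFSet) : Prop :=
  (∀ x ∈ S, π x ∈ T) ∧
  ∀ (n : ℕ) (φ : setL.BoundedFormula Empty n) (v : Fin n → ZFSet),
    (∀ i, v i ∈ S) → (ZSat S φ v ↔ ZSat T φ (fun i => π (v i)))

/-- `S` is an inner model (of ZFC): a transitive proper class model of ZFC containing
all the ordinals. -/
def IsInnerModel (S : Set ZFSet) : Prop :=
  ModelsZFC S ∧ ∀ x : ZFSet, x.IsOrdinal → x ∈ S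

/-- `μ` is a measurable cardinal from the point of view of the class `S`: there is a
`μ`-complete nonprincipal ultrafilter on `μ` in `S`. -/
def MeasurableIn (S : Set ZFSet) (μ : ZFSet) : Prop :=
  IsCardIn S μ ∧ ZFSet.omega ∈ μ ∧
  ∃ U ∈ S,
    (∀ x ∈ U, x ⊆ μ) ∧ μ ∈ U ∧ (∅ : ZFSet) ∉ U ∧
    (∀ x ∈ U, ∀ y ∈ S, y ⊆ μ → x ⊆ y → y ∈ U) ∧
    (∀ x ∈ S, ∀ y ∈ S, x ⊆ μ → y ⊆ μ → (∀ w ∈ μ, (w ∈ x ↔ w ∉ y)) → (x ∈ U ∨ y ∈ U)) ∧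
    (∀ z ∈ μ, ∃ x ∈ U, z ∉ x) ∧
    (∀ γ ∈ μ, ∀ f ∈ S,
      (∀ η ∈ γ, ∃ x ∈ U, ZFSet.pair η x ∈ f) →
      (∀ p ∈ f, ∃ η ∈ γ, ∃ x ∈ U, p = ZFSet.pair η x) →
      ∃ b ∈ U, ∀ w : ZFSet, w ∈ b ↔ (w ∈ μ ∧ ∀ η ∈ γ, ∀ x, ZFSet.pair η x ∈ f → w ∈ x))

/-- `μ` is singular from the point of view of `S`: some function in `S` maps a smaller
ordinal cofinally into `μ`. -/
def SingularIn (S : Set ZFSet) (μ : ZFSet) : Prop :=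
  ∃ γ : ZFSet, γ.IsOrdinal ∧ γ ∈ μ ∧ ∃ f ∈ S, CofinalFun f γ μ

/-- `μ` is a strong limit cardinal from the point of view of `S`: `2^κ < μ` for all `κ < μ`,
as computed in `S`. -/
def StrongLimitIn (S : Set ZFSet) (μ : ZFSet) : Prop :=
  IsCardIn S μ ∧ ZFSet.omega ∈ μ ∧
  ∀ κ ∈ μ, ∀ p ∈ S, (∀ z : ZFSet, z ∈ p ↔ (z ∈ S ∧ z ⊆ κ)) →
    ∃ α ∈ μ, ∃ f ∈ S, InjFun f p α

/-- `M` is close to `N` (`M ⊆ N` inner models): every cardinal `μ` of `N` which is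
measurable or a singular strong limit in `N` is measurable or singular in `M`, and
`μ⁺` is computed correctly by `M`, i.e. `μ^{+,M} = μ^{+,N}`. -/
def CloseTo (M N : Set ZFSet) : Prop :=
  ∀ μ ∈ N, IsCardIn N μ →
    (MeasurableIn N μ ∨ (SingularIn N μ ∧ StrongLimitIn N μ)) →
    ((MeasurableIn M μ ∨ SingularIn M μ) ∧
      ∀ ν : ZFSet, (CardSuccIn M μ ν ↔ CardSuccIn N μ ν))

/-- `t` is the transitive closure of `x`. -/
def IsTransClosureOf (t x : ZFSet) : Prop :=
  x ⊆ t ∧ t.IsTransitive ∧ ∀ u : ZFSet, x ⊆ u → u.IsTransitive → t ⊆ u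

/-- `H^S_ν`: the class of members of `S` whose transitive closure has size `< ν`,
as computed in `S`. -/
def HIn (S : Set ZFSet) (ν : ZFSet) : Set ZFSet :=
  {x | x ∈ S ∧ ∃ t ∈ S, IsTransClosureOf t x ∧ ∃ κ ∈ ν, ∃ f ∈ S, SurjFun f κ t}

/-- The von Neumann natural number `n` as a ZF-set. -/
def natZ : ℕ → ZFSet
  | 0 => ∅
  | n + 1 => insert (natZ n) (natZ n)

/-- The term given by the `i`-th bounded variable. -/
def mvar {n : ℕ} (i : Fin n) : setL.Term (Empty ⊕ Fin n) :=
  FirstOrder.Language.Term.var (Sum.inr i)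

/-- The atomic formula `v i ∈ v j`. -/
def memF {n : ℕ} (i j : Fin n) : setL.BoundedFormula Empty n :=
  FirstOrder.Language.Relations.boundedFormula₂ SetRelSym.mem (mvar i) (mvar j)

/-- Δ₀ (bounded) formulas of the language of set theory. -/
inductive IsDelta0 : ∀ {n : ℕ}, setL.BoundedFormula Empty n → Prop
  | falsum {n : ℕ} : IsDelta0 (n := n) FirstOrder.Language.BoundedFormula.falsum
  | equal {n : ℕ} (t u : setL.Term (Empty ⊕ Fin n)) :
      IsDelta0 (FirstOrder.Language.BoundedFormula.equal t u)
  | rel {n l : ℕ} (R : setL.Relations l) (ts : Fin l → setL.Term (Empty ⊕ Fin n)) :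
      IsDelta0 (FirstOrder.Language.BoundedFormula.rel R ts)
  | imp {n : ℕ} {φ ψ : setL.BoundedFormula Empty n} :
      IsDelta0 φ → IsDelta0 ψ → IsDelta0 (φ.imp ψ)
  | ball {n : ℕ} (j : Fin n) {φ : setL.BoundedFormula Empty (n + 1)} :
      IsDelta0 φ →
      IsDelta0 (((memF (Fin.last n) j.castSucc).imp φ).all)

mutual
  /-- Σ_k formulas of the Levy hierarchy. -/
  inductive LevySigma : ℕ → ∀ {n : ℕ}, setL.BoundedFormula Empty n → Prop
    | delta0 {n : ℕ} {φ : setL.BoundedFormula Empty n} : IsDelta0 φ → LevySigma 0 φ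
    | ofPi {k : ℕ} {n : ℕ} {φ : setL.BoundedFormula Empty n} :
        LevyPi k φ → LevySigma (k + 1) φ
    | ex {k : ℕ} {n : ℕ} {φ : setL.BoundedFormula Empty (n + 1)} :
        LevySigma (k + 1) φ → LevySigma (k + 1) φ.ex

  /-- Π_k formulas of the Levy hierarchy. -/
  inductive LevyPi : ℕ → ∀ {n : ℕ}, setL.BoundedFormula Empty n → Prop
    | delta0 {n : ℕ} {φ : setL.BoundedFormula Empty n} : IsDelta0 φ → LevyPi 0 φ
    | ofSigma {k : ℕ} {n : ℕ} {φ : setL.BoundedFormula Empty n} :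
        LevySigma k φ → LevyPi (k + 1) φ
    | all {k : ℕ} {n : ℕ} {φ : setL.BoundedFormula Empty (n + 1)} :
        LevyPi (k + 1) φ → LevyPi (k + 1) φ.all
end

/-- `L[A]`, for `A` a set (of ordinals): the smallest inner model containing `A`. -/
def LSet (A : ZFSet) : Set ZFSet :=
  ⋂₀ {W : Set ZFSet | IsInnerModel W ∧ A ∈ W}

/-- The sentence "for every set of ordinals `A`, `L[A] ⊨ θ`", interpreted in the
transitive class `S`.  (For `A ∈ S`, `L[A]` as computed in `S` is the true `L[A]`.) -/
def NiceHolds (θ : setL.Sentence) (S : Set ZFSet) : Prop :=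
  ∀ A ∈ S, (∀ x ∈ A, ZFSet.IsOrdinal x) → SatS (LSet A) θ

/-- The nice extension `T = ZFC + "∀ set of ordinals A, L[A] ⊨ θ"` of ZFC holds in the
transitive class `S`. -/
def THolds (θ : setL.Sentence) (S : Set ZFSet) : Prop :=
  ModelsZFC S ∧ NiceHolds θ S

/-- `C` is an inner model of ZFC from the point of view of the inner model `S`. -/
def InnerModelIn (S C : Set ZFSet) : Prop :=
  C ⊆ S ∧ ModelsZFC C ∧ ∀ x : ZFSet, x.IsOrdinal → x ∈ C

/-- The class defined, in the transitive class model `S`, by the formula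
`φ(v) = ∃μ (μ is a strong limit cardinal ∧ v ∈ H_μ ∧ H_μ ⊨ θ(v))`, where `θ` is the
witnessing formula.  This is `φ^S`. -/
def locClass (S : Set ZFSet) (θ : setL.BoundedFormula Empty 1) : Set ZFSet :=
  {x | ∃ μ ∈ S, StrongLimitIn S μ ∧ x ∈ HIn S μ ∧ ZSat (HIn S μ) θ ![x]}

universe u

/-- The formula `φ(v) = ∃μ (μ strong limit ∧ v ∈ H_μ ∧ H_μ ⊨ θ(v))` (determined by its
witnessing formula `θ`) locally defines an inner model over the nice extension
`T = ZFC + "∀ A, L[A] ⊨ θT"`:  provably in `T`, `φ^V` is an inner model of ZFC and, for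
every strong limit cardinal `μ`, `H^{φ^V}_μ = θ^{H_μ}`. -/
def LocallyDefinesInner (θT : setL.Sentence) (θ : setL.BoundedFormula Empty 1) : Prop :=
  ∀ S : Set ZFSet.{u}, IsInnerModel S → THolds θT S →
    InnerModelIn S (locClass S θ) ∧
    ∀ μ ∈ S, StrongLimitIn S μ →
      HIn (locClass S θ) μ = {x | x ∈ HIn S μ ∧ ZSat (HIn S μ) θ ![x]}


section Helpers

def rtm {n m : ℕ} (σ : Fin n → Fin m) : setL.Term (Empty ⊕ Fin n) → setL.Term (Empty ⊕ Fin m)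
  | .var (Sum.inl e) => e.elim
  | .var (Sum.inr i) => .var (Sum.inr (σ i))
  | .func f _ => f.elim

theorem tval_rtm {n m : ℕ} (σ : Fin n → Fin m) (v : Fin m → ZFSet.{u})
    (t : setL.Term (Empty ⊕ Fin n)) : tval v (rtm σ t) = tval (fun i => v (σ i)) t := by
  match t with
  | .var (Sum.inl e) => exact e.elim
  | .var (Sum.inr i) => rfl
  | .func f _ => exact f.elim

def ren : ∀ {n : ℕ}, setL.BoundedFormula Empty n → ∀ {m : ℕ}, (Fin n → Fin m) →
    setL.BoundedFormula Empty m
  | _, .falsum, _, _ => .falsum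
  | _, .equal t u, _, σ => .equal (rtm σ t) (rtm σ u)
  | _, .rel R ts, _, σ => .rel R (fun i => rtm σ (ts i))
  | _, .imp φ ψ, _, σ => .imp (ren φ σ) (ren ψ σ)
  | _, .all φ, m, σ => .all (ren φ (Fin.snoc (α := fun _ => Fin (m+1)) (fun i => (σ i).castSucc) (Fin.last m)))

theorem ZSat_ren (S : Set ZFSet.{u}) : ∀ {n : ℕ} (φ : setL.BoundedFormula Empty n) {m : ℕ}
    (σ : Fin n → Fin m) (v : Fin m → ZFSet.{u}),
    ZSat S (ren φ σ) v ↔ ZSat S φ (fun i => v (σ i))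
  | _, .falsum, _, _, _ => Iff.rfl
  | _, .equal t u, _, σ, v => by simp only [ren, ZSat, tval_rtm]
  | _, .rel R ts, _, σ, v => by
      cases R
      simp only [ren, ZSat, tval_rtm]
  | _, .imp φ ψ, _, σ, v => by
      simp only [ren, ZSat, ZSat_ren S φ, ZSat_ren S ψ]
  | n, .all φ, m, σ, v => by
      simp only [ren, ZSat, ZSat_ren S φ]
      refine forall_congr' fun x => imp_congr_right fun _ => ?_
      apply iff_of_eq
      congr 1
      funext i
      refine Fin.lastCases ?_ (fun j => ?_) i
      · simp
      · simp

def rlv (θ : setL.BoundedFormula Empty 1) : ∀ {n : ℕ}, setL.BoundedFormula Empty n →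
    setL.BoundedFormula Empty n
  | _, .falsum => .falsum
  | _, .equal t u => .equal t u
  | _, .rel R ts => .rel R ts
  | _, .imp φ ψ => .imp (rlv θ φ) (rlv θ ψ)
  | n, .all φ => .all (.imp (ren θ (fun _ => Fin.last n)) (rlv θ φ))

theorem ZSat_rlv (H : Set ZFSet.{u}) (θ : setL.BoundedFormula Empty 1) :
    ∀ {n : ℕ} (φ : setL.BoundedFormula Empty n) (v : Fin n → ZFSet.{u}),
    ZSat H (rlv θ φ) v ↔ ZSat {x | x ∈ H ∧ ZSat H θ ![x]} φ v
  | _, .falsum, _ => Iff.rfl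
  | _, .equal t u, _ => Iff.rfl
  | _, .rel R ts, _ => by
      cases R
      exact Iff.rfl
  | _, .imp φ ψ, v => by
      simp only [rlv, ZSat, ZSat_rlv H θ φ, ZSat_rlv H θ ψ]
  | n, .all φ, v => by
      simp only [rlv, ZSat, ZSat_rlv H θ φ, ZSat_ren]
      refine forall_congr' fun x => ?_
      have : (fun i : Fin 1 => (Fin.snoc v x : Fin (n+1) → ZFSet) (Fin.last n)) = ![x] := by
        funext i
        simp
      rw [this]
      simp only [Set.mem_ofPred_eq, and_imp]

/-- definability over `W` -/
def Dfn (W : Set ZFSet.{u}) (n : ℕ) (P : (Fin n → ZFSet.{u}) → Prop) : Prop :=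
  ∃ φ : setL.BoundedFormula Empty n, ∀ v, (∀ i, v i ∈ W) → (ZSat W φ v ↔ P v)

def Prj {n : ℕ} (t : (Fin n → ZFSet.{u}) → ZFSet.{u}) : Prop := ∃ i, t = fun v => v i

variable {W : Set ZFSet.{u}} {n : ℕ}

theorem Prj.last : Prj (fun v : Fin (n+1) → ZFSet.{u} => v (Fin.last n)) := ⟨_, rfl⟩
theorem Prj.var (i : Fin n) : Prj (fun v : Fin n → ZFSet.{u} => v i) := ⟨_, rfl⟩
theorem Prj.init {t : (Fin n → ZFSet.{u}) → ZFSet.{u}} (h : Prj t) :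
    Prj (fun v : Fin (n+1) → ZFSet.{u} => t (Fin.init v)) := by
  obtain ⟨i, rfl⟩ := h
  exact ⟨i.castSucc, rfl⟩

theorem Dfn.congr {P Q : (Fin n → ZFSet.{u}) → Prop} (h : Dfn W n P)
    (e : ∀ v, (∀ i, v i ∈ W) → (Q v ↔ P v)) : Dfn W n Q := by
  obtain ⟨φ, hφ⟩ := h
  exact ⟨φ, fun v hv => (hφ v hv).trans (e v hv).symm⟩

theorem Dfn.mem {s t : (Fin n → ZFSet.{u}) → ZFSet.{u}} (hs : Prj s) (ht : Prj t) :
    Dfn W n (fun v => s v ∈ t v) := by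
  obtain ⟨i, rfl⟩ := hs
  obtain ⟨j, rfl⟩ := ht
  exact ⟨.rel (l := 2) SetRelSym.mem ![mvar i, mvar j], fun v _ => Iff.rfl⟩

theorem Dfn.eq {s t : (Fin n → ZFSet.{u}) → ZFSet.{u}} (hs : Prj s) (ht : Prj t) :
    Dfn W n (fun v => s v = t v) := by
  obtain ⟨i, rfl⟩ := hs
  obtain ⟨j, rfl⟩ := ht
  exact ⟨.equal (mvar i) (mvar j), fun v _ => Iff.rfl⟩

theorem Dfn.imp {P Q : (Fin n → ZFSet.{u}) → Prop} (hP : Dfn W n P) (hQ : Dfn W n Q) :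
    Dfn W n (fun v => P v → Q v) := by
  obtain ⟨φ, hφ⟩ := hP
  obtain ⟨ψ, hψ⟩ := hQ
  exact ⟨.imp φ ψ, fun v hv => by simp only [ZSat, hφ v hv, hψ v hv]⟩

theorem Dfn.not {P : (Fin n → ZFSet.{u}) → Prop} (hP : Dfn W n P) :
    Dfn W n (fun v => ¬ P v) := by
  obtain ⟨φ, hφ⟩ := hP
  exact ⟨.imp φ .falsum, fun v hv => by simp only [ZSat, hφ v hv, Not]⟩

theorem Dfn.and {P Q : (Fin n → ZFSet.{u}) → Prop} (hP : Dfn W n P) (hQ : Dfn W n Q) :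
    Dfn W n (fun v => P v ∧ Q v) :=
  (hP.imp hQ.not).not.congr fun v _ => by tauto

theorem Dfn.or {P Q : (Fin n → ZFSet.{u}) → Prop} (hP : Dfn W n P) (hQ : Dfn W n Q) :
    Dfn W n (fun v => P v ∨ Q v) :=
  (hP.not.imp hQ).congr fun v _ => by tauto

theorem Dfn.iff {P Q : (Fin n → ZFSet.{u}) → Prop} (hP : Dfn W n P) (hQ : Dfn W n Q) :
    Dfn W n (fun v => P v ↔ Q v) :=
  ((hP.imp hQ).and (hQ.imp hP)).congr fun v _ => by tauto

theorem Dfn.all {P : (Fin n → ZFSet.{u}) → ZFSet.{u} → Prop}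
    (hP : Dfn W (n+1) (fun v => P (Fin.init v) (v (Fin.last n)))) :
    Dfn W n (fun v => ∀ x ∈ W, P v x) := by
  obtain ⟨φ, hφ⟩ := hP
  refine ⟨.all φ, fun v hv => ?_⟩
  simp only [ZSat]
  refine forall_congr' fun x => imp_congr_right fun hx => ?_
  rw [hφ]
  · simp
  · intro i
    refine Fin.lastCases ?_ (fun j => ?_) i
    · simpa using hx
    · simpa using hv j

theorem Dfn.ex {P : (Fin n → ZFSet.{u}) → ZFSet.{u} → Prop}
    (hP : Dfn W (n+1) (fun v => P (Fin.init v) (v (Fin.last n)))) :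
    Dfn W n (fun v => ∃ x ∈ W, P v x) :=
  (Dfn.all (P := fun v x => ¬ P v x) hP.not).not.congr fun v _ => by push Not; rfl

theorem Dfn.ball (hW : IsTransClass W) {t : (Fin n → ZFSet.{u}) → ZFSet.{u}} (ht : Prj t)
    {P : (Fin n → ZFSet.{u}) → ZFSet.{u} → Prop}
    (hP : Dfn W (n+1) (fun v => P (Fin.init v) (v (Fin.last n)))) :
    Dfn W n (fun v => ∀ x ∈ t v, P v x) :=
  (Dfn.all (P := fun v x => x ∈ t v → P v x) ((Dfn.mem Prj.last ht.init).imp hP)).congr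
    fun v hv => by
      obtain ⟨i, rfl⟩ := ht
      exact ⟨fun h x _ => h x, fun h x hx => h x (hW _ (hv i) _ hx) hx⟩

theorem Dfn.bex (hW : IsTransClass W) {t : (Fin n → ZFSet.{u}) → ZFSet.{u}} (ht : Prj t)
    {P : (Fin n → ZFSet.{u}) → ZFSet.{u} → Prop}
    (hP : Dfn W (n+1) (fun v => P (Fin.init v) (v (Fin.last n)))) :
    Dfn W n (fun v => ∃ x ∈ t v, P v x) :=
  (Dfn.ball hW ht (P := fun v x => ¬ P v x) hP.not).not.congr fun v _ => by push Not; rfl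

theorem sing_mem (hW : ModelsZFC W) {x : ZFSet.{u}} (hx : x ∈ W) : ({x} : ZFSet) ∈ W := by
  rw [← ZFSet.pair_eq_singleton]
  exact hW.1.2.2.1 x hx x hx

theorem pair_memW (hW : ModelsZFC W) {x y : ZFSet.{u}} (hx : x ∈ W) (hy : y ∈ W) :
    ZFSet.pair x y ∈ W :=
  hW.1.2.2.1 _ (sing_mem hW hx) _ (hW.1.2.2.1 x hx y hy)

theorem insert_memW (hW : ModelsZFC W) {x y : ZFSet.{u}} (hx : x ∈ W) (hy : y ∈ W) :
    insert x y ∈ W := by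
  have : insert x y = ZFSet.sUnion {{x}, y} := by
    ext z
    simp [ZFSet.mem_insert_iff]
  rw [this]
  exact hW.1.2.2.2.1 _ (hW.1.2.2.1 _ (sing_mem hW hx) _ hy)

theorem Dfn.pairEq (hW : ModelsZFC W) {q s t : (Fin n → ZFSet.{u}) → ZFSet.{u}}
    (hq : Prj q) (hs : Prj s) (ht : Prj t) :
    Dfn W n (fun v => q v = ZFSet.pair (s v) (t v)) := by
  have h : Dfn W n (fun v => ∀ z ∈ W, (z ∈ q v ↔
      ((∀ u ∈ W, (u ∈ z ↔ u = s v)) ∨ (∀ u ∈ W, (u ∈ z ↔ (u = s v ∨ u = t v)))))) := by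
    apply Dfn.all
    apply Dfn.iff (Dfn.mem Prj.last hq.init)
    apply Dfn.or
    · apply Dfn.all
      exact Dfn.iff (Dfn.mem Prj.last Prj.last.init) (Dfn.eq Prj.last hs.init.init)
    · apply Dfn.all
      exact Dfn.iff (Dfn.mem Prj.last Prj.last.init)
        ((Dfn.eq Prj.last hs.init.init).or (Dfn.eq Prj.last ht.init.init))
  refine h.congr fun v hv => ?_
  obtain ⟨i, rfl⟩ := hq
  obtain ⟨j, rfl⟩ := hs
  obtain ⟨k, rfl⟩ := ht
  have hT := hW.1.1
  have key : ∀ z ∈ W, (z ∈ ZFSet.pair (v j) (v k) ↔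
      ((∀ u ∈ W, (u ∈ z ↔ u = v j)) ∨ (∀ u ∈ W, (u ∈ z ↔ (u = v j ∨ u = v k))))) := by
    intro z hz
    have e1 : z = {v j} ↔ (∀ u ∈ W, (u ∈ z ↔ u = v j)) := by
      constructor
      · rintro rfl
        simp
      · intro h
        ext u
        rw [ZFSet.mem_singleton]
        exact ⟨fun hu => (h u (hT _ hz _ hu)).1 hu, fun hu => (h u (hu ▸ hv j)).2 hu⟩
    have e2 : z = {v j, v k} ↔ (∀ u ∈ W, (u ∈ z ↔ (u = v j ∨ u = v k))) := by
      constructor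
      · rintro rfl
        simp
      · intro h
        ext u
        rw [ZFSet.mem_pair]
        refine ⟨fun hu => (h u (hT _ hz _ hu)).1 hu, fun hu => (h u ?_).2 hu⟩
        rcases hu with rfl | rfl
        · exact hv j
        · exact hv k
    rw [← e1, ← e2, ZFSet.pair, ZFSet.mem_pair]
  constructor
  · intro h
    simp only at h
    simp only [h]
    exact key
  · intro h
    ext z
    constructor
    · intro hz
      have hz' := hT _ (hv i) _ hz
      exact (key z hz').2 ((h z hz').1 hz)
    · intro hz
      have hz' := hT _ (pair_memW hW (hv j) (hv k)) _ hz
      exact (h z hz').2 ((key z hz').1 hz)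

theorem Dfn.pairMem (hW : ModelsZFC W) {q s t : (Fin n → ZFSet.{u}) → ZFSet.{u}}
    (hs : Prj s) (ht : Prj t) (hq : Prj q) :
    Dfn W n (fun v => ZFSet.pair (s v) (t v) ∈ q v) := by
  have h : Dfn W n (fun v => ∃ z ∈ q v, z = ZFSet.pair (s v) (t v)) := by
    apply Dfn.bex hW.1.1 hq
    exact Dfn.pairEq hW Prj.last hs.init ht.init
  exact h.congr fun v _ => by simp

theorem mem_snoc {p : Fin n → ZFSet.{u}} {x : ZFSet.{u}} (hp : ∀ i, p i ∈ W) (hx : x ∈ W) :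
    ∀ i, (Fin.snoc p x : Fin (n+1) → ZFSet.{u}) i ∈ W := by
  intro i
  refine Fin.lastCases ?_ (fun j => ?_) i
  · simpa using hx
  · simpa using hp j

theorem sep3 (hW : ModelsZFC W) {Q : ZFSet.{u} → ZFSet.{u} → ZFSet.{u} → ZFSet.{u} → Prop}
    (hQ : Dfn W 4 (fun v => Q (v 0) (v 1) (v 2) (v 3))) {a b c d : ZFSet.{u}}
    (ha : a ∈ W) (hb : b ∈ W) (hc : c ∈ W) (hd : d ∈ W) :
    ∃ e ∈ W, ∀ y, y ∈ e ↔ y ∈ d ∧ Q a b c y := by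
  obtain ⟨φ, hφ⟩ := hQ
  have hp : ∀ i, (![a, b, c] : Fin 3 → ZFSet.{u}) i ∈ W := by
    intro i
    fin_cases i <;> assumption
  obtain ⟨e, he, h⟩ := hW.1.2.2.2.2.2.1 3 φ ![a, b, c] hp d hd
  refine ⟨e, he, fun y => (h y).trans (and_congr_right fun hy => ?_)⟩
  exact hφ _ (mem_snoc hp (hW.1.1 _ hd _ hy))

theorem repl4 (hW : ModelsZFC W)
    {Q : ZFSet.{u} → ZFSet.{u} → ZFSet.{u} → ZFSet.{u} → ZFSet.{u} → ZFSet.{u} → Prop}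
    (hQ : Dfn W 6 (fun v => Q (v 0) (v 1) (v 2) (v 3) (v 4) (v 5))) {a b c d' d : ZFSet.{u}}
    (ha : a ∈ W) (hb : b ∈ W) (hc : c ∈ W) (hd' : d' ∈ W) (hd : d ∈ W) (F : ZFSet.{u} → ZFSet.{u})
    (hF : ∀ x ∈ d, F x ∈ W) (hQF : ∀ x ∈ d, ∀ y ∈ W, (Q a b c d' x y ↔ y = F x)) :
    ∃ e ∈ W, ∀ y, y ∈ e ↔ ∃ x ∈ d, y = F x := by
  obtain ⟨φ, hφ⟩ := hQ
  have hp : ∀ i, (![a, b, c, d'] : Fin 4 → ZFSet.{u}) i ∈ W := by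
    intro i
    fin_cases i <;> assumption
  have key : ∀ x ∈ d, ∀ y ∈ W,
      (ZSat W φ (Fin.snoc (Fin.snoc ![a, b, c, d'] x) y) ↔ y = F x) := fun x hx y hy =>
    (hφ _ (mem_snoc (mem_snoc hp (hW.1.1 _ hd _ hx)) hy)).trans (hQF x hx y hy)
  obtain ⟨e, he, h⟩ := hW.1.2.2.2.2.2.2.1 4 φ ![a, b, c, d'] hp d hd (fun x hx =>
    ⟨F x, ⟨hF x hx, (key x hx _ (hF x hx)).2 rfl⟩, fun y hy => (key x hx y hy.1).1 hy.2⟩)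
  refine ⟨e, he, fun y => (h y).trans ?_⟩
  constructor
  · rintro ⟨x, hx, hy, h'⟩
    exact ⟨x, hx, (key x hx y hy).1 h'⟩
  · rintro ⟨x, hx, rfl⟩
    exact ⟨x, hx, hF x hx, (key x hx _ (hF x hx)).2 rfl⟩

/-- no definable functional relation from `a ∈ μ` onto a cardinal `μ` -/
theorem no_surj (hW : IsInnerModel W) {μ : ZFSet.{u}} (hμ : IsCardIn W μ)
    (hω : ZFSet.omega ∈ μ)
    {R : ZFSet.{u} → ZFSet.{u} → ZFSet.{u} → ZFSet.{u} → ZFSet.{u} → Prop}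
    (hR : ∀ {n : ℕ} {p q r s t : (Fin n → ZFSet.{u}) → ZFSet.{u}}, Prj p → Prj q → Prj r →
      Prj s → Prj t → Dfn W n (fun v => R (p v) (q v) (r v) (s v) (t v)))
    {b c d a : ZFSet.{u}} (hb : b ∈ W) (hc : c ∈ W) (hd : d ∈ W) (ha : a ∈ μ)
    (hfun : ∀ x ∈ a, ∀ y ∈ μ, ∀ y' ∈ μ, R b c d x y → R b c d x y' → y = y')
    (hsurj : ∀ y ∈ μ, ∃ x ∈ a, R b c d x y) : False := by
  classical
  have hμW : μ ∈ W := hW.2 _ hμ.1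
  have hT := hW.1.1.1
  have h0 : (∅ : ZFSet.{u}) ∈ μ := hμ.1.mem_trans ZFSet.omega_zero hω
  have haW : a ∈ W := hT _ hμW _ ha
  let F0 : ZFSet.{u} → ZFSet.{u} := fun x =>
    if h : ∃ y ∈ μ, R b c d x y then h.choose else ∅
  have hF0μ : ∀ x, F0 x ∈ μ := by
    intro x
    by_cases h : ∃ y ∈ μ, R b c d x y
    · simp only [F0, dif_pos h]
      exact h.choose_spec.1
    · simp only [F0, dif_neg h]
      exact h0
  have hF0R : ∀ x, (∃ y ∈ μ, R b c d x y) → R b c d x (F0 x) := by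
    intro x h
    simp only [F0, dif_pos h]
    exact h.choose_spec.2
  have hF0n : ∀ x, (¬ ∃ y ∈ μ, R b c d x y) → F0 x = ∅ := by
    intro x h
    simp only [F0, dif_neg h]
  obtain ⟨g, hgW, hg⟩ := repl4 hW.1 (Q := fun b c d μ x q => ∃ y ∈ μ, q = ZFSet.pair x y ∧
      (R b c d x y ∨ ((∀ y' ∈ μ, ¬ R b c d x y') ∧ ∀ z ∈ y, ¬ z = z)))
    (by
      apply Dfn.bex hT (Prj.var 3)
      apply Dfn.and (Dfn.pairEq hW.1 (Prj.var 5).init (Prj.var 4).init Prj.last)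
      apply Dfn.or (hR (Prj.var 0).init (Prj.var 1).init (Prj.var 2).init (Prj.var 4).init Prj.last)
      apply Dfn.and
      · apply Dfn.ball hT (Prj.var 3).init
        exact (hR (Prj.var 0).init.init (Prj.var 1).init.init (Prj.var 2).init.init
          (Prj.var 4).init.init Prj.last).not
      · apply Dfn.ball hT Prj.last
        exact (Dfn.eq Prj.last Prj.last).not) hb hc hd hμW haW
    (fun x => ZFSet.pair x (F0 x))
    (fun x hx => pair_memW hW.1 (hT _ haW _ hx) (hT _ hμW _ (hF0μ x)))
    (by
      intro x hx q hq
      constructor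
      · rintro ⟨y, hy, rfl, h | ⟨h, h'⟩⟩
        · congr 1
          exact hfun x hx y hy _ (hF0μ x) h (hF0R x ⟨y, hy, h⟩)
        · congr 1
          rw [hF0n x (by push Not; exact h)]
          rw [ZFSet.eq_empty]
          exact fun z hz => h' z hz rfl
      · rintro rfl
        refine ⟨_, hF0μ x, rfl, ?_⟩
        by_cases h : ∃ y ∈ μ, R b c d x y
        · exact Or.inl (hF0R x h)
        · right
          refine ⟨by push Not at h; exact h, ?_⟩
          rw [hF0n x h]
          exact fun z hz => (ZFSet.notMem_empty z hz).elim)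
  refine hμ.2 a ha g hgW ⟨⟨?_, ?_⟩, ?_⟩
  · intro q hq
    obtain ⟨x, hx, rfl⟩ := (hg q).1 hq
    exact ZFSet.pair_mem_prod.2 ⟨hx, hF0μ x⟩
  · intro x hx
    refine ⟨F0 x, (hg _).2 ⟨x, hx, rfl⟩, ?_⟩
    intro y hy
    obtain ⟨x', hx', e⟩ := (hg _).1 hy
    obtain ⟨rfl, rfl⟩ := ZFSet.pair_inj.1 e
    rfl
  · intro y hy
    obtain ⟨x, hx, h⟩ := hsurj y hy
    refine ⟨x, hx, (hg _).2 ⟨x, hx, ?_⟩⟩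
    rw [hfun x hx y hy _ (hF0μ x) h (hF0R x ⟨y, hy, h⟩)]

noncomputable def clp (D : ZFSet.{u}) : ZFSet.{u} → ZFSet.{u} :=
  ZFSet.mem_wf.fix fun x ih => ZFSet.range (fun w : {w // w ∈ ZFSet.sep (fun w => w ∈ D) x} =>
    ih w.1 (ZFSet.mem_sep.1 w.2).1)

theorem mem_clp {D x z : ZFSet.{u}} : z ∈ clp D x ↔ ∃ w ∈ x, w ∈ D ∧ z = clp D w := by
  rw [clp, ZFSet.mem_wf.fix_eq, ← clp, ZFSet.mem_range]
  constructor
  · rintro ⟨⟨w, hw⟩, rfl⟩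
    rw [ZFSet.mem_sep] at hw
    exact ⟨w, hw.1, hw.2, rfl⟩
  · rintro ⟨w, hw, hD, rfl⟩
    exact ⟨⟨w, ZFSet.mem_sep.2 ⟨hw, hD⟩⟩, rfl⟩

theorem clp_ord {D : ZFSet.{u}} (x : ZFSet.{u}) : x.IsOrdinal → (clp D x).IsOrdinal := by
  refine ZFSet.inductionOn x ?_
  intro x ih hx
  rw [ZFSet.isOrdinal_iff_forall_mem_isOrdinal]
  constructor
  · intro y hy z hz
    obtain ⟨w, hw, hD, rfl⟩ := mem_clp.1 hy
    obtain ⟨w', hw', hD', rfl⟩ := mem_clp.1 hz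
    exact mem_clp.2 ⟨w', hx.mem_trans hw' hw, hD', rfl⟩
  · intro y hy
    obtain ⟨w, hw, hD, rfl⟩ := mem_clp.1 hy
    exact ih w hw (hx.mem hw)

def Att (D g : ZFSet.{u}) (W : Set ZFSet.{u}) : Prop :=
  ∀ a ∈ W, ∀ b ∈ W, ZFSet.pair a b ∈ g →
    (∀ z ∈ b, ∃ w ∈ a, w ∈ D ∧ ZFSet.pair w z ∈ g) ∧
    (∀ w ∈ a, w ∈ D → ∃ z ∈ b, ZFSet.pair w z ∈ g)

theorem att_eq (hT : IsTransClass W) {D g : ZFSet.{u}} (h : Att D g W) (a : ZFSet.{u}) :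
    a ∈ W → ∀ b ∈ W, ZFSet.pair a b ∈ g → b = clp D a := by
  refine ZFSet.inductionOn a ?_
  intro a ih ha b hb hab
  obtain ⟨h1, h2⟩ := h a ha b hb hab
  ext z
  rw [mem_clp]
  constructor
  · intro hz
    obtain ⟨w, hw, hD, hwz⟩ := h1 z hz
    exact ⟨w, hw, hD, ih w hw (hT _ ha _ hw) z (hT _ hb _ hz) hwz⟩
  · rintro ⟨w, hw, hD, rfl⟩
    obtain ⟨z, hz, hwz⟩ := h2 w hw hD
    rw [← ih w hw (hT _ ha _ hw) z (hT _ hb _ hz) hwz]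
    exact hz

theorem att_of (hT : IsTransClass W) {D g l : ZFSet.{u}} (hl : l.IsOrdinal)
    (hg : ∀ q, q ∈ g ↔ ∃ x ∈ l, q = ZFSet.pair x (clp D x)) : Att D g W := by
  intro a _ b _ hab
  obtain ⟨x, hx, e⟩ := (hg _).1 hab
  obtain ⟨rfl, rfl⟩ := ZFSet.pair_inj.1 e
  constructor
  · intro z hz
    obtain ⟨w, hw, hD, rfl⟩ := mem_clp.1 hz
    exact ⟨w, hw, hD, (hg _).2 ⟨w, hl.mem_trans hw hx, rfl⟩⟩
  · intro w hw hD
    exact ⟨clp D w, mem_clp.2 ⟨w, hw, hD, rfl⟩, (hg _).2 ⟨w, hl.mem_trans hw hx, rfl⟩⟩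

theorem clp_graph (hW : IsInnerModel W) {D : ZFSet.{u}} (hD : D ∈ W) (l : ZFSet.{u}) :
    l.IsOrdinal → ∃ g ∈ W, ∀ q, q ∈ g ↔ ∃ x ∈ l, q = ZFSet.pair x (clp D x) := by
  have hT := hW.1.1.1
  refine ZFSet.inductionOn l ?_
  intro l ih hl
  have hmem : ∀ x ∈ l, ZFSet.pair x (clp D x) ∈ W := fun x hx =>
    pair_memW hW.1 (hW.2 _ (hl.mem hx)) (hW.2 _ (clp_ord _ (hl.mem hx)))
  refine repl4 hW.1 (Q := fun D _ _ _ x q => ∃ g ∈ W, Att D g W ∧ q ∈ g ∧ ∃ y ∈ W, q = ZFSet.pair x y)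
    ?_ hD hD hD hD (hW.2 _ hl) (fun x => ZFSet.pair x (clp D x)) hmem ?_
  · apply Dfn.ex
    apply Dfn.and
    · unfold Att
      apply Dfn.all
      apply Dfn.all
      apply Dfn.imp (Dfn.pairMem hW.1 Prj.last.init Prj.last Prj.last.init.init)
      apply Dfn.and
      · apply Dfn.ball hT Prj.last
        apply Dfn.bex hT Prj.last.init.init
        exact (Dfn.mem Prj.last (Prj.var 0).init.init.init.init.init).and
          (Dfn.pairMem hW.1 Prj.last Prj.last.init Prj.last.init.init.init.init)
      · apply Dfn.ball hT Prj.last.init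
        apply Dfn.imp (Dfn.mem Prj.last (Prj.var 0).init.init.init.init)
        apply Dfn.bex hT Prj.last.init
        exact (Dfn.pairMem hW.1 Prj.last.init Prj.last Prj.last.init.init.init.init)
    · apply Dfn.and (Dfn.mem (Prj.var 5).init Prj.last)
      apply Dfn.ex
      exact Dfn.pairEq hW.1 (Prj.var 5).init.init (Prj.var 4).init.init Prj.last
  · intro x hx q hq
    constructor
    · rintro ⟨g, hg, hA, hqg, y, hy, rfl⟩
      rw [att_eq hT hA x (hW.2 _ (hl.mem hx)) y hy hqg]
    · rintro rfl
      obtain ⟨g, hg, h⟩ := ih x hx (hl.mem hx)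
      refine ⟨insert (ZFSet.pair x (clp D x)) g, insert_memW hW.1 (hmem x hx) hg, ?_,
        ZFSet.mem_insert _ _, _, hW.2 _ (clp_ord _ (hl.mem hx)), rfl⟩
      apply att_of hT (ZFSet.isOrdinal_succ (hl.mem hx))
      intro q
      rw [ZFSet.mem_insert_iff, h]
      simp [ZFSet.mem_insert_iff]

theorem inj_of_surj (hW : IsInnerModel W) {p k f : ZFSet.{u}} (hp : p ∈ W) (hk : k.IsOrdinal)
    (hf : f ∈ W)
    (hfun : ∀ x ∈ k, ∀ y y', ZFSet.pair x y ∈ f → ZFSet.pair x y' ∈ f → y = y')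
    (hsurj : ∀ y ∈ p, ∃ x ∈ k, ZFSet.pair x y ∈ f) :
    ∃ β : ZFSet.{u}, β.IsOrdinal ∧ ∃ h ∈ W, InjFun h p β ∧
      ∀ y ∈ β, ∃ z ∈ p, ZFSet.pair z y ∈ h := by
  have hT := hW.1.1.1
  obtain ⟨D, hDW, hD⟩ := sep3 hW.1 (Q := fun f p _ x => ∃ y ∈ p, ZFSet.pair x y ∈ f ∧
      ∀ x' ∈ x, ¬ ZFSet.pair x' y ∈ f)
    (by
      apply Dfn.bex hT (Prj.var 1)
      apply Dfn.and (Dfn.pairMem hW.1 (Prj.var 3).init Prj.last (Prj.var 0).init)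
      apply Dfn.ball hT (Prj.var 3).init
      exact (Dfn.pairMem hW.1 Prj.last Prj.last.init (Prj.var 0).init.init).not)
    hf hp hp (hW.2 _ hk)
  obtain ⟨G, hGW, hG⟩ := clp_graph hW hDW k hk
  have hDk : ∀ x ∈ D, x ∈ k := fun x hx => ((hD x).1 hx).1
  have hex : ∀ z ∈ p, ∃ x ∈ D, ZFSet.pair x z ∈ f := by
    intro z hz
    obtain ⟨x, ⟨hx, hxz⟩, hmin⟩ := ZFSet.mem_wf.has_min {x | x ∈ k ∧ ZFSet.pair x z ∈ f}
      (hsurj z hz)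
    refine ⟨x, (hD x).2 ⟨hx, z, hz, hxz, fun x' hx' h' => ?_⟩, hxz⟩
    exact hmin x' ⟨hk.mem_trans hx' hx, h'⟩ hx'
  have hleast : ∀ x ∈ D, ∀ z, ZFSet.pair x z ∈ f → z ∈ p ∧ ∀ x' ∈ x, ZFSet.pair x' z ∉ f := by
    intro x hx z hxz
    obtain ⟨hxk, y, hy, hxy, h⟩ := (hD x).1 hx
    rw [hfun x hxk z y hxz hxy]
    exact ⟨hy, h⟩
  have huniq : ∀ z, ∀ x ∈ D, ∀ x' ∈ D, ZFSet.pair x z ∈ f → ZFSet.pair x' z ∈ f → x = x' := by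
    intro z x hx x' hx' h h'
    rcases (hk.mem (hDk x hx)).mem_trichotomous (hk.mem (hDk x' hx')) with e | e | e
    · exact ((hleast x' hx' z h').2 x e h).elim
    · exact e
    · exact ((hleast x hx z h).2 x' e h').elim
  have hcinj : ∀ x ∈ D, ∀ x' ∈ D, clp D x = clp D x' → x = x' := by
    intro x hx x' hx' h
    rcases (hk.mem (hDk x hx)).mem_trichotomous (hk.mem (hDk x' hx')) with e | e | e
    · have : clp D x ∈ clp D x' := mem_clp.2 ⟨x, e, hx, rfl⟩
      rw [h] at this
      exact (ZFSet.mem_irrefl _ this).elim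
    · exact e
    · have : clp D x' ∈ clp D x := mem_clp.2 ⟨x', e, hx', rfl⟩
      rw [h] at this
      exact (ZFSet.mem_irrefl _ this).elim
  choose! l hlD hlf using hex
  obtain ⟨h, hhW, hh⟩ := repl4 hW.1 (Q := fun D f G _ z q => ∃ x ∈ D, ∃ y ∈ W,
      ZFSet.pair x z ∈ f ∧ ZFSet.pair x y ∈ G ∧ q = ZFSet.pair z y)
    (by
      apply Dfn.bex hT (Prj.var 0)
      apply Dfn.ex
      apply Dfn.and (Dfn.pairMem hW.1 Prj.last.init (Prj.var 4).init.init (Prj.var 1).init.init)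
      apply Dfn.and (Dfn.pairMem hW.1 Prj.last.init Prj.last (Prj.var 2).init.init)
      exact Dfn.pairEq hW.1 (Prj.var 5).init.init (Prj.var 4).init.init Prj.last)
    hDW hf hGW hGW hp (fun z => ZFSet.pair z (clp D (l z)))
    (fun z hz => pair_memW hW.1 (hT _ hp _ hz) (hW.2 _ (clp_ord _ (hk.mem (hDk _ (hlD z hz))))))
    (by
      intro z hz q hq
      constructor
      · rintro ⟨x, hx, y, hy, hxz, hxy, rfl⟩
        obtain ⟨x', hx', e⟩ := (hG _).1 hxy
        obtain ⟨rfl, rfl⟩ := ZFSet.pair_inj.1 e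
        rw [huniq z x hx (l z) (hlD z hz) hxz (hlf z hz)]
      · rintro rfl
        exact ⟨l z, hlD z hz, _, hW.2 _ (clp_ord _ (hk.mem (hDk _ (hlD z hz)))), hlf z hz,
          (hG _).2 ⟨_, hDk _ (hlD z hz), rfl⟩, rfl⟩)
  have hh' : ∀ z y, ZFSet.pair z y ∈ h ↔ z ∈ p ∧ y = clp D (l z) := by
    intro z y
    rw [hh]
    constructor
    · rintro ⟨x, hx, e⟩
      obtain ⟨rfl, rfl⟩ := ZFSet.pair_inj.1 e
      exact ⟨hx, rfl⟩
    · rintro ⟨hz, rfl⟩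
      exact ⟨z, hz, rfl⟩
  refine ⟨clp D k, clp_ord k hk, h, hhW, ⟨⟨?_, ?_⟩, ?_⟩, ?_⟩
  · intro q hq
    obtain ⟨z, hz, rfl⟩ := (hh q).1 hq
    exact ZFSet.pair_mem_prod.2 ⟨hz, mem_clp.2 ⟨l z, hDk _ (hlD z hz), hlD z hz, rfl⟩⟩
  · intro z hz
    exact ⟨clp D (l z), (hh' _ _).2 ⟨hz, rfl⟩, fun y hy => ((hh' _ _).1 hy).2⟩
  · intro z hz z' hz' y hy hy'
    have e1 := ((hh' _ _).1 hy).2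
    have e2 := ((hh' _ _).1 hy').2
    have e3 := hcinj _ (hlD z hz) _ (hlD z' hz') (e1.symm.trans e2)
    have e4 := hlf z hz
    rw [e3] at e4
    exact hfun _ (hDk _ (hlD z' hz')) _ _ e4 (hlf z' hz')
  · intro y hy
    obtain ⟨w, hw, hwD, rfl⟩ := mem_clp.1 hy
    obtain ⟨_, z, hz, hwz, _⟩ := (hD w).1 hwD
    refine ⟨z, hz, (hh' _ _).2 ⟨hz, ?_⟩⟩
    rw [huniq z w hwD (l z) (hlD z hz) hwz (hlf z hz)]

/-- strong limits go down -/
theorem strongLimit_down {S M : Set ZFSet.{u}} (hS : IsInnerModel S) (hM : IsInnerModel M)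
    (hMS : M ⊆ S)
    (hH : ∀ x ∈ M, ∃ μ : ZFSet.{u}, μ.IsOrdinal ∧ x ∈ HIn M μ)
    {μ : ZFSet.{u}} (hμ : StrongLimitIn S μ) : StrongLimitIn M μ := by
  obtain ⟨hc, hω, hpow⟩ := hμ
  refine ⟨⟨hc.1, fun α hα f hf => hc.2 α hα f (hMS hf)⟩, hω, ?_⟩
  intro κ hκ p hp hpp
  obtain ⟨P, hPS, hP⟩ := hS.1.2 κ (hS.2 _ (hc.1.mem hκ))
  obtain ⟨α, hα, g, hg, hgi⟩ := hpow κ hκ P hPS hP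
  obtain ⟨μ', hμ', -, t, ht, htc, κ', hκ', f, hf, hfs⟩ := hH p hp
  have hpt : p ⊆ t := htc.1
  obtain ⟨β, hβ, h, hh, hhi, hhs⟩ := inj_of_surj hM hp (hμ'.mem hκ') hf
    (fun x hx y y' hy hy' => (hfs.1.2 x hx).unique hy hy')
    (fun y hy => hfs.2 y (hpt hy))
  rcases hβ.mem_or_subset hc.1 with hb | hb
  · exact ⟨β, hb, h, hh, hhi⟩
  · exfalso
    have hpP : ∀ z ∈ p, z ∈ P := fun z hz => (hP z).2 ⟨hMS ((hpp z).1 hz).1, ((hpp z).1 hz).2⟩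
    refine no_surj hS hc hω (R := fun p g h x y => ∃ z ∈ p, ZFSet.pair z x ∈ g ∧ ZFSet.pair z y ∈ h)
      ?_ (hMS hp) hg (hMS hh) hα ?_ ?_
    · intro n p q r s t hp hq hr hs ht
      apply Dfn.bex hS.1.1.1 hp
      exact (Dfn.pairMem hS.1 Prj.last hs.init hq.init).and
        (Dfn.pairMem hS.1 Prj.last ht.init hr.init)
    · rintro x hx y hy y' hy' ⟨z, hz, h1, h2⟩ ⟨z', hz', h1', h2'⟩
      obtain rfl := hgi.2 z (hpP z hz) z' (hpP z' hz') x h1 h1'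
      exact (hhi.1.2 z hz).unique h2 h2'
    · intro y hy
      obtain ⟨z, hz, hzy⟩ := hhs y (hb hy)
      obtain ⟨x, hx, -⟩ := hgi.1.2 z (hpP z hz)
      exact ⟨x, (ZFSet.pair_mem_prod.1 (hgi.1.1 hx)).2, z, hz, hx, hzy⟩

/-- an ordinal in `H_μ` is below `μ` -/
theorem ord_mem_of_HIn {S : Set ZFSet.{u}} (hS : IsInnerModel S) {μ α : ZFSet.{u}}
    (hμ : StrongLimitIn S μ) (hα : α.IsOrdinal) (h : α ∈ HIn S μ) : α ∈ μ := by
  obtain ⟨hc, hω, -⟩ := hμ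
  rcases hα.mem_or_subset hc.1 with hb | hb
  · exact hb
  · exfalso
    obtain ⟨-, t, ht, htc, κ', hκ', f, hf, hfs⟩ := h
    refine no_surj hS hc hω (R := fun f _ _ x y => ZFSet.pair x y ∈ f)
      ?_ hf hf hf hκ' ?_ ?_
    · intro n p q r s t hp hq hr hs ht
      exact Dfn.pairMem hS.1 hs ht hp
    · intro x hx y _ y' _ h h'
      exact (hfs.1.2 x hx).unique h h'
    · intro y hy
      exact hfs.2 y (htc.1 (hb hy))

end Helpers

/-- Let `T = ZFC + "∀ set of ordinals A, L[A] ⊨ θT"` be a nice extension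
of ZFC (so `θT` is Π₂), and let `φ, ψ` be formulas (given by witnessing formulas `θφ, θψ`)
which locally define inner models over `T`.  Then there is a formula `τ` (given by a
witnessing formula `θτ`) which locally defines an inner model over `T` and which is,
provably over `T`, equivalent to the relativization `ψ^φ`:  in every model `S` of `T`,
`τ^S = ψ^{φ^S}`. -/
theorem local_relativization (θT : setL.Sentence) (hθT : LevyPi 2 θT)
    (θφ θψ : setL.BoundedFormula Empty 1)
    (hφ : LocallyDefinesInner.{u} θT θφ) (hψ : LocallyDefinesInner.{u} θT θψ) :
    ∃ θτ : setL.BoundedFormula Empty 1, LocallyDefinesInner.{u} θT θτ ∧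
      ∀ S : Set ZFSet.{u}, IsInnerModel S → THolds θT S →
        locClass S θτ = locClass (locClass S θφ) θψ := by
  let θτ : setL.BoundedFormula Empty 1 := .imp (.imp θφ (.imp (rlv θφ θψ) .falsum)) .falsum
  have hsat : ∀ (H : Set ZFSet.{u}) (x : ZFSet.{u}), ZSat H θτ ![x] ↔
      ZSat H θφ ![x] ∧ ZSat {x | x ∈ H ∧ ZSat H θφ ![x]} θψ ![x] := by
    intro H x
    rw [← ZSat_rlv]
    simp only [θτ, ZSat]
    tauto
  have main : ∀ S : Set ZFSet.{u}, IsInnerModel S → THolds θT S →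
      InnerModelIn S (locClass (locClass S θφ) θψ) ∧
      locClass S θτ = locClass (locClass S θφ) θψ ∧
      ∀ μ ∈ S, StrongLimitIn S μ →
        HIn (locClass (locClass S θφ) θψ) μ = {x | x ∈ HIn S μ ∧ ZSat (HIn S μ) θτ ![x]} := by
    intro S hS hT
    obtain ⟨hM, hMH⟩ := hφ S hS hT
    set M := locClass S θφ with hMdef
    have hMi : IsInnerModel M := hM.2
    have hMT : THolds θT M := ⟨hM.2.1, fun A hA h => hT.2 A (hM.1 hA) h⟩
    obtain ⟨hN, hNH⟩ := hψ M hMi hMT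
    set N := locClass M θψ with hNdef
    have hdown : ∀ μ, StrongLimitIn S μ → StrongLimitIn M μ := fun μ hμ => by
      refine strongLimit_down hS hMi hM.1 (fun x hx => ?_) hμ
      have hx' := hx
      rw [hMdef] at hx'
      obtain ⟨ν, hν, hsl, hxH, hxs⟩ := hx'
      refine ⟨ν, hsl.1.1, ?_⟩
      rw [hMH ν hν hsl]
      exact ⟨hxH, hxs⟩
    have hloc : ∀ μ ∈ S, StrongLimitIn S μ →
        HIn N μ = {x | x ∈ HIn S μ ∧ ZSat (HIn S μ) θτ ![x]} := by
      intro μ hμ hsl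
      rw [hNH μ (hMi.2 _ hsl.1.1) (hdown μ hsl), hMH μ hμ hsl]
      ext x
      change (x ∈ HIn S μ ∧ ZSat (HIn S μ) θφ ![x]) ∧ _ ↔ x ∈ HIn S μ ∧ _
      rw [hsat, and_assoc]
    refine ⟨⟨hN.1.trans hM.1, hN.2⟩, ?_, hloc⟩
    ext x
    constructor
    · rintro ⟨μ, hμ, hsl, hx, hxs⟩
      have : x ∈ HIn N μ := by
        rw [hloc μ hμ hsl]
        exact ⟨hx, hxs⟩
      exact this.1
    · intro hx
      have hx' := hx
      rw [hNdef] at hx'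
      obtain ⟨ν, hν, hsl, hxH, hxs⟩ := hx'
      have hxN : x ∈ HIn N ν := by
        rw [hNH ν hν hsl]
        exact ⟨hxH, hxs⟩
      obtain ⟨_, t, ht, htc, κ, hκ, f, hf, hfs⟩ := hxN
      have hκo : κ.IsOrdinal := hsl.1.1.mem hκ
      have hκM : κ ∈ M := hMi.2 _ hκo
      rw [hMdef] at hκM
      obtain ⟨μ, hμ, hslμ, hκH, -⟩ := hκM
      have hκμ := ord_mem_of_HIn hS hslμ hκo hκH
      have hxN' : x ∈ HIn N μ := ⟨hx, t, ht, htc, κ, hκμ, f, hf, hfs⟩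
      rw [hloc μ hμ hslμ] at hxN'
      exact ⟨μ, hμ, hslμ, hxN'.1, hxN'.2⟩
  refine ⟨θτ, ?_, fun S hS hT => (main S hS hT).2.1⟩
  intro S hS hT
  obtain ⟨h1, h2, h3⟩ := main S hS hT
  rw [h2]
  exact ⟨h1, h3⟩
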